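/- Every minimal blocking set of a d-quasi-forest has size at most d + 2. -/

import Mathlib

attribute [local instance] Classical.propDecidable

namespace VCKernel

variable {V : Type*} [Fintype V] [DecidableEq V]

/-- `S` is an independent set of `G`. -/
def IsIndep (G : SimpleGraph V) (S : Finset V) : Prop :=
  ∀ u ∈ S, ∀ v ∈ S, ¬ G.Adj u v

/-- Independence number of the subgraph of `G` induced on the vertex set `A`. -/
noncomputable def alphaOn (G : SimpleGraph V) (A : Set V) : ℕ :=
  sSup {n | ∃ S : Finset V, ↑S ⊆ A ∧ IsIndep G S ∧ S.card = n}

/-- Independence number `α(G)`. -/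
noncomputable def alpha (G : SimpleGraph V) : ℕ := alphaOn G Set.univ

/-- `Y` is a blocking set: deleting it decreases the independence number. -/
def IsBlocking (G : SimpleGraph V) (Y : Finset V) : Prop :=
  alphaOn G (Set.univ \ ↑Y) < alpha G

/-- `Y` is a minimal blocking set. -/
def IsMinBlocking (G : SimpleGraph V) (Y : Finset V) : Prop :=
  IsBlocking G Y ∧ ∀ Y' ⊂ Y, ¬ IsBlocking G Y'

/-- Open neighborhood of the vertex set `X'` in `G`. -/
def nbhd (G : SimpleGraph V) (X' : Finset V) : Set V :=
  {v | ∃ u ∈ X', G.Adj u v}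

/-- Number of conflicts induced by `X'` on the induced subgraph with vertex set `A`. -/
noncomputable def conf (G : SimpleGraph V) (A : Set V) (X' : Finset V) : ℕ :=
  alphaOn G A - alphaOn G (A \ nbhd G X')

/-- `C` is (the vertex set of) a connected component of the subgraph of `G`
induced on `A`. -/
def IsCompOf (G : SimpleGraph V) (A C : Set V) : Prop :=
  C ⊆ A ∧ (G.induce C).Connected ∧ ∀ u ∈ C, ∀ v ∈ A, G.Adj u v → v ∈ C

/-- Feasible solution to the Independent Set LP of the subgraph induced on `A`. -/
def FeasISOn (G : SimpleGraph V) (A : Set V) (x : V → ℝ) : Prop :=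
  (∀ v ∈ A, 0 ≤ x v ∧ x v ≤ 1) ∧
    ∀ u ∈ A, ∀ v ∈ A, G.Adj u v → x u + x v ≤ 1

/-- Half-integrality on `A`. -/
def HalfIntOn (A : Set V) (x : V → ℝ) : Prop :=
  ∀ v ∈ A, x v = 0 ∨ x v = 1/2 ∨ x v = 1

/-- Objective value of an LP solution on vertex set `A`. -/
noncomputable def weightOn (A : Set V) (x : V → ℝ) : ℝ :=
  ∑ v, if v ∈ A then x v else 0

/-- `x` is an optimum half-integral solution to the Independent Set LP
of the subgraph induced on `A`. -/
def OptHIOn (G : SimpleGraph V) (A : Set V) (x : V → ℝ) : Prop :=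
  FeasISOn G A x ∧ HalfIntOn A x ∧
    ∀ y : V → ℝ, FeasISOn G A y → HalfIntOn A y → weightOn A y ≤ weightOn A x

/-- Feasible solution to the Vertex Cover LP of `G`. -/
def FeasVC (G : SimpleGraph V) (x : V → ℝ) : Prop :=
  (∀ v, 0 ≤ x v ∧ x v ≤ 1) ∧ ∀ u v, G.Adj u v → 1 ≤ x u + x v

/-- Optimum value of the Independent Set LP of `G`. -/
noncomputable def lpIS (G : SimpleGraph V) : ℝ :=
  sSup {w | ∃ x : V → ℝ, FeasISOn G Set.univ x ∧ w = ∑ v, x v}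

/-- Optimum value of the Vertex Cover LP of `G`. -/
noncomputable def lpVC (G : SimpleGraph V) : ℝ :=
  sInf {w | ∃ x : V → ℝ, FeasVC G x ∧ w = ∑ v, x v}

/-- `C` is a vertex cover of `G`. -/
def IsVC (G : SimpleGraph V) (C : Finset V) : Prop :=
  ∀ u v, G.Adj u v → u ∈ C ∨ v ∈ C

/-- Vertex cover number of `G`. -/
noncomputable def vcNum (G : SimpleGraph V) : ℕ :=
  sInf {n | ∃ C : Finset V, IsVC G C ∧ C.card = n}

/-- `Z` is a feedback vertex set of `G`. -/
def IsFVS (G : SimpleGraph V) (Z : Finset V) : Prop :=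
  (G.induce ((↑Z : Set V)ᶜ)).IsAcyclic

/-- `Z` is an odd cycle transversal of `G`. -/
def IsOCT (G : SimpleGraph V) (Z : Finset V) : Prop :=
  (G.induce ((↑Z : Set V)ᶜ)).Colorable 2

/-- `G` is a `d`-quasi-forest: each connected component has a feedback
vertex set of size at most `d`. -/
def QuasiForest (G : SimpleGraph V) (d : ℕ) : Prop :=
  ∀ C : Set V, IsCompOf G Set.univ C →
    ∃ Z : Finset V, Z.card ≤ d ∧ (G.induce (C \ ↑Z)).IsAcyclic

/-- `G` is `d`-quasi-bipartite: each connected component has an odd cycle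
transversal of size at most `d`. -/
def QuasiBipartite (G : SimpleGraph V) (d : ℕ) : Prop :=
  ∀ C : Set V, IsCompOf G Set.univ C →
    ∃ Z : Finset V, Z.card ≤ d ∧ (G.induce (C \ ↑Z)).Colorable 2

/-- Feedback vertex set number of `G`. -/
noncomputable def fvsNum (G : SimpleGraph V) : ℕ :=
  sInf {n | ∃ Z : Finset V, IsFVS G Z ∧ Z.card = n}

/-- Odd cycle transversal number of `G`. -/
noncomputable def octNum (G : SimpleGraph V) : ℕ :=
  sInf {n | ∃ Z : Finset V, IsOCT G Z ∧ Z.card = n}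

/-- The subgraph of `G` induced on `A` has treedepth at most `k`
(elimination-forest characterization of treedepth). -/
def tdLE (G : SimpleGraph V) : ℕ → Set V → Prop
  | 0, A => A = ∅
  | (k+1), A => ∀ C : Set V, IsCompOf G A C → ∃ v ∈ C, tdLE G k (C \ {v})

/-!
Let `α` be the independence number and let `β` be twice the optimum of the half-integral
independent set LP, so that `2α ≤ β`. A minimal blocking set `Y` blocks some connected component `C`
and is minimal with that property.

Choose `T ⊆ Y` of maximum size with `β(C \ T) + |T| ≤ β(C)`. By maximality, deleting one or two
further vertices of `Y` from `C \ T` costs `β` less than their number, and uncrossing of LP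
solutions upgrades this to `β((C \ T) \ Y) = β(C \ T)`. Persistence of LP solutions (Nemhauser and
Trotter) then gives `α(C \ T) = α(C \ Y)`, so `T` is blocking and `T = Y`. Deleting a minimal
blocking set lowers `α` by exactly one, hence `|Y| ≤ β(C) - β(C \ Y) ≤ β(C) - 2(α(C) - 1)`.

If `d` vertices meet all odd cycles of `C`, then `β(C) ≤ 2α(C) + d`, because the vertices of value
`1/2` outside these `d` vertices split into two independent sets.
-/

/-- No edge of `G` joins a vertex of `A` to a vertex of `B`. The pair `(A, B)` encodes the feasible
half-integral solution `(1_A + 1_B) / 2` of the independent set LP. -/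
def IsCrossIndep (G : SimpleGraph V) (A B : Finset V) : Prop :=
  ∀ a ∈ A, ∀ b ∈ B, ¬ G.Adj a b

/-- Independence number of the bipartite graph whose sides are disjoint copies of `P` and `Q`, with
the adjacency of `G` between them. The value `crossAlpha G X X` is twice the optimum of the
half-integral independent set LP on `X`; allowing two different sides makes uncrossing of LP
solutions the inequality `crossAlpha_add_crossAlpha_le`. -/
noncomputable def crossAlpha (G : SimpleGraph V) (P Q : Set V) : ℕ :=
  sSup {n | ∃ A B : Finset V, ↑A ⊆ P ∧ ↑B ⊆ Q ∧ IsCrossIndep G A B ∧ A.card + B.card = n}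

section IndependentSets

omit [Fintype V]

variable {G : SimpleGraph V} {A B C D S W : Finset V}

omit [DecidableEq V] in
theorem IsIndep.mono (hS : IsIndep G S) (h : W ⊆ S) : IsIndep G W :=
  fun u hu v hv => hS u (h hu) v (h hv)

omit [DecidableEq V] in
theorem IsCrossIndep.symm (h : IsCrossIndep G A B) : IsCrossIndep G B A :=
  fun b hb a ha hba => h a ha b hb hba.symm

theorem IsCrossIndep.union_inter (h : IsCrossIndep G A B) (h' : IsCrossIndep G C D) :
    IsCrossIndep G (A ∪ C) (B ∩ D) := by
  intro a ha b hb
  obtain ⟨hbB, hbD⟩ := Finset.mem_inter.1 hb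
  exact (Finset.mem_union.1 ha).elim (fun ha => h a ha b hbB) (fun ha => h' a ha b hbD)

theorem IsCrossIndep.isIndep_inter_union (h : IsCrossIndep G A B) (hW : IsIndep G W)
    (hWAB : W ⊆ A ∪ B) : IsIndep G (A ∩ B ∪ W) := by
  have cross : IsCrossIndep G (A ∩ B) (A ∪ B) := by
    rw [Finset.inter_comm]
    exact (h.union_inter h.symm).symm
  have subset : A ∩ B ∪ W ⊆ A ∪ B := Finset.union_subset Finset.inter_subset_union hWAB
  intro u hu v hv
  rcases Finset.mem_union.1 hu with huAB | huW
  · exact cross u huAB v (subset hv)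
  rcases Finset.mem_union.1 hv with hvAB | hvW
  · exact cross.symm u (subset hu) v hvAB
  · exact hW u huW v hvW

theorem exists_biUnion_isIndep_eq_of_colorable {X : Set V} {n : ℕ}
    (hX : (G.induce X).Colorable n) (hS : ↑S ⊆ X) :
    ∃ f : Fin n → Finset V, (∀ i, IsIndep G (f i)) ∧ Finset.univ.biUnion f = S := by
  obtain ⟨color⟩ := hX
  refine ⟨fun i => S.filter fun v => ∃ h : v ∈ X, color ⟨v, h⟩ = i, fun i u hu v hv huv => ?_, ?_⟩
  · obtain ⟨-, huX, hui⟩ := Finset.mem_filter.1 hu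
    obtain ⟨-, hvX, hvi⟩ := Finset.mem_filter.1 hv
    exact color.valid (v := ⟨u, huX⟩) (w := ⟨v, hvX⟩) huv (hui.trans hvi.symm)
  · ext v
    simpa using fun hv : v ∈ S => hS hv

end IndependentSets

section IndependenceNumber

omit [Fintype V] [DecidableEq V]

variable [Finite V] {G : SimpleGraph V} {A B : Set V} {S : Finset V}

theorem bddAbove_isIndep_card (G : SimpleGraph V) (A : Set V) :
    BddAbove {n | ∃ S : Finset V, ↑S ⊆ A ∧ IsIndep G S ∧ S.card = n} := by
  refine ((Set.finite_range (Finset.card (α := V))).subset ?_).bddAbove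
  rintro _ ⟨S, -, -, rfl⟩
  exact Set.mem_range_self S

theorem IsIndep.card_le_alphaOn (hS : IsIndep G S) (hSA : ↑S ⊆ A) : S.card ≤ alphaOn G A :=
  le_csSup (bddAbove_isIndep_card G A) ⟨S, hSA, hS, rfl⟩

theorem exists_isIndep_card_eq_alphaOn (G : SimpleGraph V) (A : Set V) :
    ∃ S : Finset V, ↑S ⊆ A ∧ IsIndep G S ∧ S.card = alphaOn G A := by
  refine Nat.sSup_mem ?_ (bddAbove_isIndep_card G A)
  exact ⟨0, ∅, by simp, by simp [IsIndep], rfl⟩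

theorem alphaOn_mono (h : A ⊆ B) : alphaOn G A ≤ alphaOn G B := by
  obtain ⟨S, hSA, hS, hcard⟩ := exists_isIndep_card_eq_alphaOn G A
  exact hcard ▸ hS.card_le_alphaOn (hSA.trans h)

theorem alphaOn_le_alphaOn_sdiff_add_card (G : SimpleGraph V) (A : Set V) (T : Finset V) :
    alphaOn G A ≤ alphaOn G (A \ T) + T.card := by
  obtain ⟨S, hSA, hS, hcard⟩ := exists_isIndep_card_eq_alphaOn G A
  have hST : (S \ T).card ≤ alphaOn G (A \ T) := by
    refine (hS.mono Finset.sdiff_subset).card_le_alphaOn ?_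
    rw [Finset.coe_sdiff]
    exact Set.sdiff_subset_sdiff_left hSA
  have := Finset.le_card_sdiff T S
  omega

end IndependenceNumber

section Components

omit [Fintype V] [DecidableEq V]

variable [Finite V] {G : SimpleGraph V} {Y : Finset V}

theorem alphaOn_le_sum_connectedComponent (G : SimpleGraph V) [Fintype G.ConnectedComponent]
    (A : Set V) :
    alphaOn G A ≤ ∑ c : G.ConnectedComponent, alphaOn G (c.supp ∩ A) := by
  obtain ⟨S, hSA, hS, hcard⟩ := exists_isIndep_card_eq_alphaOn G A
  rw [← hcard, Finset.card_eq_sum_card_fiberwise (f := G.connectedComponentMk) (t := Finset.univ)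
    (fun _ _ => Finset.mem_coe.2 (Finset.mem_univ _))]
  refine Finset.sum_le_sum fun c _ => (hS.mono (Finset.filter_subset _ _)).card_le_alphaOn ?_
  intro v hv
  obtain ⟨hvS, hvc⟩ := Finset.mem_filter.1 hv
  exact ⟨hvc, hSA hvS⟩

theorem sum_connectedComponent_le_alphaOn (G : SimpleGraph V) [Fintype G.ConnectedComponent]
    (A : Set V) :
    ∑ c : G.ConnectedComponent, alphaOn G (c.supp ∩ A) ≤ alphaOn G A := by
  choose S hSA hS hcard using fun c : G.ConnectedComponent =>
    exists_isIndep_card_eq_alphaOn G (c.supp ∩ A)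
  have mk_eq : ∀ {c v}, v ∈ S c → G.connectedComponentMk v = c := fun hv => (hSA _ hv).1
  have disjoint : ((Finset.univ : Finset G.ConnectedComponent) : Set _).PairwiseDisjoint S :=
    fun c _ c' _ hne => Finset.disjoint_left.2 fun v hv hv' =>
      hne ((mk_eq hv).symm.trans (mk_eq hv'))
  have indep : IsIndep G (Finset.univ.biUnion S) := by
    intro u hu v hv huv
    obtain ⟨c, -, huc⟩ := Finset.mem_biUnion.1 hu
    obtain ⟨c', -, hvc'⟩ := Finset.mem_biUnion.1 hv
    obtain rfl : c = c' := by
      rw [← mk_eq huc, ← mk_eq hvc']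
      exact SimpleGraph.ConnectedComponent.sound huv.reachable
    exact hS c u huc v hvc' huv
  calc ∑ c : G.ConnectedComponent, alphaOn G (c.supp ∩ A)
      = (Finset.univ.biUnion S).card := by
        rw [Finset.card_biUnion disjoint]
        exact Finset.sum_congr rfl fun c _ => (hcard c).symm
    _ ≤ alphaOn G A := by
        refine indep.card_le_alphaOn fun v hv => ?_
        obtain ⟨c, -, hvc⟩ := Finset.mem_biUnion.1 hv
        exact (hSA c hvc).2

theorem alphaOn_eq_sum_connectedComponent (G : SimpleGraph V) [Fintype G.ConnectedComponent]
    (A : Set V) :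
    alphaOn G A = ∑ c : G.ConnectedComponent, alphaOn G (c.supp ∩ A) :=
  (alphaOn_le_sum_connectedComponent G A).antisymm (sum_connectedComponent_le_alphaOn G A)

theorem isBlocking_iff_exists_connectedComponent :
    IsBlocking G Y ↔
      ∃ c : G.ConnectedComponent, alphaOn G (c.supp \ Y) < alphaOn G c.supp := by
  cases nonempty_fintype G.ConnectedComponent
  have sdiff_le (c : G.ConnectedComponent) : alphaOn G (c.supp \ Y) ≤ alphaOn G c.supp :=
    alphaOn_mono Set.sdiff_subset
  rw [IsBlocking, alpha, alphaOn_eq_sum_connectedComponent G Set.univ,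
    alphaOn_eq_sum_connectedComponent G (Set.univ \ Y)]
  simp only [← Set.inter_sdiff_assoc, Set.inter_univ]
  constructor
  · intro h
    obtain ⟨c, -, hc⟩ := Finset.exists_lt_of_sum_lt h
    exact ⟨c, hc⟩
  · rintro ⟨c, hc⟩
    exact Finset.sum_lt_sum (fun c _ => sdiff_le c) ⟨c, Finset.mem_univ c, hc⟩

omit [Finite V] in
theorem isCompOf_univ_supp (c : G.ConnectedComponent) : IsCompOf G Set.univ c.supp :=
  ⟨Set.subset_univ _, c.maximal_connected_induce_supp.prop, fun _ hu _ _ huv =>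
    (SimpleGraph.ConnectedComponent.sound huv.symm.reachable).trans hu⟩

end Components

section CrossAlpha

omit [Fintype V] [DecidableEq V]

variable [Finite V] {G : SimpleGraph V} {P P' Q Q' X : Set V} {A B Y : Finset V}

theorem bddAbove_isCrossIndep_card (G : SimpleGraph V) (P Q : Set V) :
    BddAbove {n | ∃ A B : Finset V,
      ↑A ⊆ P ∧ ↑B ⊆ Q ∧ IsCrossIndep G A B ∧ A.card + B.card = n} := by
  refine ((Set.finite_range fun p : Finset V × Finset V => p.1.card + p.2.card).subset ?_).bddAbove
  rintro _ ⟨A, B, -, -, -, rfl⟩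
  exact Set.mem_range_self (A, B)

theorem IsCrossIndep.card_add_card_le_crossAlpha (h : IsCrossIndep G A B) (hA : ↑A ⊆ P)
    (hB : ↑B ⊆ Q) : A.card + B.card ≤ crossAlpha G P Q :=
  le_csSup (bddAbove_isCrossIndep_card G P Q) ⟨A, B, hA, hB, h, rfl⟩

theorem exists_isCrossIndep_card_eq_crossAlpha (G : SimpleGraph V) (P Q : Set V) :
    ∃ A B : Finset V, ↑A ⊆ P ∧ ↑B ⊆ Q ∧ IsCrossIndep G A B ∧
      A.card + B.card = crossAlpha G P Q := by
  refine Nat.sSup_mem ?_ (bddAbove_isCrossIndep_card G P Q)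
  exact ⟨0, ∅, ∅, by simp, by simp, by simp [IsCrossIndep], rfl⟩

theorem crossAlpha_mono (hP : P ⊆ P') (hQ : Q ⊆ Q') : crossAlpha G P Q ≤ crossAlpha G P' Q' := by
  obtain ⟨A, B, hA, hB, h, hcard⟩ := exists_isCrossIndep_card_eq_crossAlpha G P Q
  exact hcard ▸ h.card_add_card_le_crossAlpha (hA.trans hP) (hB.trans hQ)

omit [Finite V] in
theorem crossAlpha_comm (G : SimpleGraph V) (P Q : Set V) :
    crossAlpha G P Q = crossAlpha G Q P := by
  unfold crossAlpha
  congr 1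
  ext n
  constructor <;>
  · rintro ⟨A, B, hA, hB, h, rfl⟩
    exact ⟨B, A, hB, hA, h.symm, add_comm _ _⟩

theorem two_mul_alphaOn_le_crossAlpha (G : SimpleGraph V) (X : Set V) :
    2 * alphaOn G X ≤ crossAlpha G X X := by
  obtain ⟨S, hSX, hS, hcard⟩ := exists_isIndep_card_eq_alphaOn G X
  rw [← hcard, two_mul]
  exact IsCrossIndep.card_add_card_le_crossAlpha hS hSX hSX

theorem crossAlpha_add_crossAlpha_le (G : SimpleGraph V) (P Q P' Q' : Set V) :
    crossAlpha G P Q + crossAlpha G P' Q' ≤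
      crossAlpha G (P ∪ P') (Q ∩ Q') + crossAlpha G (P ∩ P') (Q ∪ Q') := by
  obtain ⟨A, B, hA, hB, h, hcard⟩ := exists_isCrossIndep_card_eq_crossAlpha G P Q
  obtain ⟨A', B', hA', hB', h', hcard'⟩ := exists_isCrossIndep_card_eq_crossAlpha G P' Q'
  have join : (A ∪ A').card + (B ∩ B').card ≤ crossAlpha G (P ∪ P') (Q ∩ Q') := by
    apply (h.union_inter h').card_add_card_le_crossAlpha <;> push_cast
    · exact Set.union_subset_union hA hA'
    · exact Set.inter_subset_inter hB hB'
  have meet : (A ∩ A').card + (B ∪ B').card ≤ crossAlpha G (P ∩ P') (Q ∪ Q') := by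
    apply (h.symm.union_inter h'.symm).symm.card_add_card_le_crossAlpha <;> push_cast
    · exact Set.inter_subset_inter hA hA'
    · exact Set.union_subset_union hB hB'
  have cardA := Finset.card_union_add_card_inter A A'
  have cardB := Finset.card_union_add_card_inter B B'
  omega

theorem crossAlpha_le_crossAlpha_sdiff_left
    (h : ∀ y ∈ Y, crossAlpha G P Q ≤ crossAlpha G (P \ {y}) Q) :
    crossAlpha G P Q ≤ crossAlpha G (P \ Y) Q := by
  induction Y using Finset.induction_on with
  | empty => simp
  | insert y Y _ ih =>
    have hy := h y (Finset.mem_insert_self y Y)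
    have hY := ih fun z hz => h z (Finset.mem_insert_of_mem hz)
    have uncross := crossAlpha_add_crossAlpha_le G (P \ {y}) Q (P \ Y) Q
    have union_le : crossAlpha G (P \ {y} ∪ P \ Y) (Q ∩ Q) ≤ crossAlpha G P Q :=
      crossAlpha_mono (Set.union_subset Set.sdiff_subset Set.sdiff_subset) Set.inter_subset_left
    have inter_eq : P \ {y} ∩ (P \ Y) = P \ ↑(insert y Y) := by
      rw [Finset.coe_insert, Set.insert_eq, Set.sdiff_inter_sdiff]
    rw [inter_eq, Set.union_self] at uncross
    omega

theorem crossAlpha_le_crossAlpha_sdiff_pair {y z : V}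
    (hy : crossAlpha G X X ≤ crossAlpha G (X \ {y}) (X \ {y}))
    (hyz : crossAlpha G X X < crossAlpha G (X \ {y, z}) (X \ {y, z}) + 2) :
    crossAlpha G X X ≤ crossAlpha G (X \ {y, z}) (X \ {y}) := by
  -- Uncrossing yields the claim up to an error of `1 / 2`, which integrality removes.
  have subset : X \ {y, z} ⊆ X \ {y} := Set.sdiff_subset_sdiff_right (by simp)
  have uncross := crossAlpha_add_crossAlpha_le G (X \ {y, z}) (X \ {y, z}) (X \ {y}) (X \ {y})
  rw [Set.union_eq_right.2 subset, Set.inter_eq_left.2 subset,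
    crossAlpha_comm G (X \ {y}) (X \ {y, z})] at uncross
  omega

theorem crossAlpha_le_crossAlpha_sdiff [DecidableEq V]
    (h : ∀ y ∈ Y, ∀ z ∈ Y, crossAlpha G X X <
      crossAlpha G (X \ {y, z}) (X \ {y, z}) + ({y, z} : Finset V).card) :
    crossAlpha G X X ≤ crossAlpha G (X \ Y) (X \ Y) := by
  have delete_one : ∀ y ∈ Y, crossAlpha G X X ≤ crossAlpha G (X \ {y}) (X \ {y}) := by
    intro y hy
    simpa [Nat.lt_succ_iff] using h y hy y hy
  have delete_left : ∀ y ∈ Y, crossAlpha G X X ≤ crossAlpha G (X \ Y) (X \ {y}) := by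
    intro y hy
    have hle : crossAlpha G (X \ {y}) (X \ {y}) ≤ crossAlpha G ((X \ {y}) \ Y) (X \ {y}) := by
      refine crossAlpha_le_crossAlpha_sdiff_left fun z hz => ?_
      have hyz := crossAlpha_le_crossAlpha_sdiff_pair (delete_one y hy)
        ((h y hy z hz).trans_le (Nat.add_le_add_left Finset.card_le_two _))
      rw [Set.sdiff_sdiff, Set.singleton_union]
      exact (crossAlpha_mono Set.sdiff_subset Set.sdiff_subset).trans hyz
    exact (delete_one y hy).trans
      (hle.trans (crossAlpha_mono (Set.sdiff_subset_sdiff_left Set.sdiff_subset) subset_rfl))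
  obtain rfl | ⟨y, hy⟩ := Y.eq_empty_or_nonempty
  · simp
  calc crossAlpha G X X
      ≤ crossAlpha G X (X \ Y) := by
        rw [crossAlpha_comm G X (X \ Y)]
        exact (delete_left y hy).trans (crossAlpha_mono subset_rfl Set.sdiff_subset)
    _ ≤ crossAlpha G (X \ Y) (X \ Y) := by
        refine crossAlpha_le_crossAlpha_sdiff_left fun z hz => ?_
        rw [crossAlpha_comm G (X \ {z})]
        exact (crossAlpha_mono subset_rfl Set.sdiff_subset).trans (delete_left z hz)

theorem alphaOn_le_alphaOn_sdiff_of_crossAlpha_le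
    (h : crossAlpha G X X ≤ crossAlpha G (X \ Y) (X \ Y)) :
    alphaOn G X ≤ alphaOn G (X \ Y) := by
  obtain ⟨A, B, hA, hB, hAB, hcard⟩ := exists_isCrossIndep_card_eq_crossAlpha G (X \ Y) (X \ Y)
  obtain ⟨I, hIX, hI, hIcard⟩ := exists_isIndep_card_eq_alphaOn G X
  have hABX : ↑(A ∪ B) ⊆ X \ (Y : Set V) := by
    rw [Finset.coe_union]
    exact Set.union_subset hA hB
  -- Exchanging `I` for `A ∩ B ∪ I ∩ (A ∪ B)` loses nothing as `(A, B)` is optimal on all of `X`.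
  have enlarged : (A ∪ B ∪ I).card + (B ∩ A ∩ I).card ≤ crossAlpha G X X := by
    refine ((hAB.union_inter hAB.symm).union_inter hI).card_add_card_le_crossAlpha ?_ ?_
    · rw [Finset.coe_union]
      exact Set.union_subset (hABX.trans Set.sdiff_subset) hIX
    · exact (Finset.coe_subset.2 Finset.inter_subset_right).trans hIX
  have replaced : (A ∩ B ∪ I ∩ (A ∪ B)).card ≤ alphaOn G (X \ Y) := by
    refine (hAB.isIndep_inter_union (hI.mono Finset.inter_subset_left)
      Finset.inter_subset_right).card_le_alphaOn ((Finset.coe_subset.2 ?_).trans hABX)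
    exact Finset.union_subset Finset.inter_subset_union Finset.inter_subset_right
  have inter_eq : A ∩ B ∩ (I ∩ (A ∪ B)) = B ∩ A ∩ I := by grind
  have card_replaced := Finset.card_union_add_card_inter (A ∩ B) (I ∩ (A ∪ B))
  have card_enlarged := Finset.card_union_add_card_inter I (A ∪ B)
  have card_AB := Finset.card_union_add_card_inter A B
  rw [inter_eq] at card_replaced
  rw [Finset.union_comm I] at card_enlarged
  omega

theorem exists_subset_crossAlpha_sdiff_add_card_le (G : SimpleGraph V) (X : Set V) (Y : Finset V) :
    ∃ T ⊆ Y, crossAlpha G (X \ T) (X \ T) + T.card ≤ crossAlpha G X X ∧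
      crossAlpha G (X \ T) (X \ T) ≤ crossAlpha G ((X \ T) \ Y) ((X \ T) \ Y) := by
  obtain ⟨T, -, ⟨hTY, hT⟩, hmax⟩ := exists_maximal_ge_of_wellFoundedGT
    (fun T : Finset V => T ⊆ Y ∧
      crossAlpha G (X \ T) (X \ T) + T.card ≤ crossAlpha G X X) ∅ (by simp)
  refine ⟨T, hTY, hT, crossAlpha_le_crossAlpha_sdiff fun y hy z hz => ?_⟩
  by_contra! hyz
  have sdiff_eq : (X \ T) \ {y, z} = X \ ↑(T ∪ {y, z}) := by
    rw [Set.sdiff_sdiff]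
    push_cast
    rfl
  have hTyz : T ∪ {y, z} ≤ T := by
    refine hmax ⟨Finset.union_subset hTY (by grind), ?_⟩ Finset.subset_union_left
    have := Finset.card_union_le T {y, z}
    rw [← sdiff_eq]
    omega
  rw [sdiff_eq, Finset.union_eq_left.2 (Finset.union_subset_right hTyz)] at hyz
  have : 0 < ({y, z} : Finset V).card := Finset.card_pos.2 (Finset.insert_nonempty _ _)
  omega

theorem alphaOn_le_alphaOn_sdiff_add_one_of_minimal (hY : alphaOn G (X \ Y) < alphaOn G X)
    (hmin : ∀ Y' ⊂ Y, alphaOn G X ≤ alphaOn G (X \ Y')) :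
    alphaOn G X ≤ alphaOn G (X \ Y) + 1 := by
  obtain ⟨y, hy⟩ : Y.Nonempty := by
    by_contra! rfl
    simp at hY
  calc alphaOn G X
      ≤ alphaOn G (X \ ↑(Y.erase y)) := hmin _ (Finset.erase_ssubset hy)
    _ ≤ alphaOn G ((X \ ↑(Y.erase y)) \ ↑({y} : Finset V)) + 1 :=
        alphaOn_le_alphaOn_sdiff_add_card G _ {y}
    _ = alphaOn G (X \ Y) + 1 := by
        rw [Set.sdiff_sdiff, ← Finset.coe_union, Finset.union_comm, ← Finset.insert_eq,
          Finset.insert_erase hy]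

theorem card_add_two_mul_alphaOn_le_of_minimal (hY : alphaOn G (X \ Y) < alphaOn G X)
    (hmin : ∀ Y' ⊂ Y, alphaOn G X ≤ alphaOn G (X \ Y')) :
    Y.card + 2 * alphaOn G X ≤ crossAlpha G X X + 2 := by
  obtain ⟨T, hTY, hT, hle⟩ := exists_subset_crossAlpha_sdiff_add_card_le G X Y
  have blocking : alphaOn G (X \ T) < alphaOn G X :=
    calc alphaOn G (X \ T)
        ≤ alphaOn G ((X \ T) \ Y) := alphaOn_le_alphaOn_sdiff_of_crossAlpha_le hle
      _ ≤ alphaOn G (X \ Y) := alphaOn_mono (Set.sdiff_subset_sdiff_left Set.sdiff_subset)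
      _ < alphaOn G X := hY
  obtain rfl : T = Y := by
    by_contra hne
    exact (hmin T (hTY.ssubset_of_ne hne)).not_gt blocking
  have lower := two_mul_alphaOn_le_crossAlpha G (X \ T)
  have drop := alphaOn_le_alphaOn_sdiff_add_one_of_minimal hY hmin
  omega

end CrossAlpha

section QuasiBipartite

omit [Fintype V] [DecidableEq V]

variable [Finite V] {G : SimpleGraph V} {d : ℕ}

theorem crossAlpha_le_two_mul_alphaOn_add_card {X : Set V} {Z : Finset V}
    (hZ : (G.induce (X \ Z)).Colorable 2) :
    crossAlpha G X X ≤ 2 * alphaOn G X + Z.card := by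
  obtain ⟨A, B, hA, hB, hAB, hcard⟩ := exists_isCrossIndep_card_eq_crossAlpha G X X
  have hABX : ↑(A ∪ B) ⊆ X := by
    rw [Finset.coe_union]
    exact Set.union_subset hA hB
  let H := (A ∪ B) \ (A ∩ B)
  have hHX : ↑(H \ Z) ⊆ X \ (Z : Set V) := by
    rw [Finset.coe_sdiff]
    exact Set.sdiff_subset_sdiff_left ((Finset.coe_subset.2 Finset.sdiff_subset).trans hABX)
  obtain ⟨W, hW, hWH⟩ := exists_biUnion_isIndep_eq_of_colorable hZ hHX
  have indep_bound : ∀ i, (A ∩ B).card + (W i).card ≤ alphaOn G X := by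
    intro i
    have hWi : W i ⊆ H :=
      ((Finset.subset_biUnion_of_mem W (Finset.mem_univ i)).trans hWH.subset).trans
        Finset.sdiff_subset
    have hWiAB : W i ⊆ A ∪ B := hWi.trans Finset.sdiff_subset
    rw [← Finset.card_union_of_disjoint (Finset.disjoint_sdiff.mono_right hWi)]
    exact (hAB.isIndep_inter_union (hW i) hWiAB).card_le_alphaOn
      ((Finset.coe_subset.2 (Finset.union_subset Finset.inter_subset_union hWiAB)).trans hABX)
  have card_split : (H \ Z).card ≤ (W 0).card + (W 1).card := by
    rw [← hWH, ← Fin.sum_univ_two fun i => (W i).card]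
    exact Finset.card_biUnion_le
  have card_H : H.card + (A ∩ B).card = (A ∪ B).card :=
    Finset.card_sdiff_add_card_eq_card Finset.inter_subset_union
  have card_AB := Finset.card_union_add_card_inter A B
  have card_Z := Finset.le_card_sdiff Z H
  have bound₀ := indep_bound 0
  have bound₁ := indep_bound 1
  omega

omit [Finite V] in
theorem QuasiForest.quasiBipartite (hG : QuasiForest G d) : QuasiBipartite G d := fun C hC =>
  let ⟨Z, hZd, hZ⟩ := hG C hC
  ⟨Z, hZd, hZ.colorable_two⟩

theorem stmt6_general (G : SimpleGraph V) (d : ℕ) (hG : QuasiBipartite G d)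
    (Y : Finset V) (hY : IsMinBlocking G Y) :
    Y.card ≤ d + 2 := by
  obtain ⟨c, hc⟩ := isBlocking_iff_exists_connectedComponent.1 hY.1
  obtain ⟨Z, hZd, hZ⟩ := hG c.supp (isCompOf_univ_supp c)
  have hmin : ∀ Y' ⊂ Y, alphaOn G c.supp ≤ alphaOn G (c.supp \ Y') := fun Y' hY' =>
    not_lt.1 fun hlt => hY.2 Y' hY' (isBlocking_iff_exists_connectedComponent.2 ⟨c, hlt⟩)
  have upper := card_add_two_mul_alphaOn_le_of_minimal hc hmin
  have gap := crossAlpha_le_two_mul_alphaOn_add_card hZ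
  omega

end QuasiBipartite

/-- Every minimal blocking set of a `d`-quasi-forest has size at most `d + 2`. -/
theorem stmt6 (G : SimpleGraph V) (d : ℕ) (hG : QuasiForest G d)
    (Y : Finset V) (hY : IsMinBlocking G Y) :
    Y.card ≤ d + 2 :=
  stmt6_general G d hG.quasiBipartite Y hY

end VCKernel
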